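/- arXiv:2201.06780 — 6 statements merged into one kernel-verified Lean document; each statement's English description precedes it below -/
import Mathlib

section
/- Let λ ∈ ℝ with λ ≠ 0, let C ∈ ℝ, let I ⊆ ℝ be an open set, and let U : ℝ → ℝ be differentiable on I with U(y) > 0 for all y ∈ I. If the implicit relation y = -U(y) - C·U(y)^{1+1/λ} holds for all y ∈ I (the power being a real power of the positive number U(y)), then U satisfies the self-similar Burgers equation -λ·U(y) + ((1+λ)·y + U(y))·U'(y) = 0 for all y ∈ I. -/
/-!
Differentiating the relation gives `1 = -U' - C (1 + 1/λ) U^{1/λ} U'`. Multiplying by `λ U` turns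
the last term into `-(1 + λ) (C U^{1+1/λ}) U'`, and the relation itself says
`C U^{1+1/λ} = -(y + U)`; eliminating the power leaves the self-similar Burgers equation.
-/

/-- If `U` is differentiable and positive on an open set `I` and satisfies the
implicit relation `y = -U(y) - C·U(y)^{1+1/λ}` on `I` (with `λ ≠ 0`), then `U` satisfies the
self-similar Burgers equation `-λ·U + ((1+λ)·y + U)·U' = 0` on `I`. -/
theorem implicit_solves_selfSimilarBurgers (lam : ℝ) (hlam : lam ≠ 0) (C : ℝ)
    (I : Set ℝ) (hI : IsOpen I) (U : ℝ → ℝ) (hU : DifferentiableOn ℝ U I)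
    (hpos : ∀ y ∈ I, 0 < U y)
    (himp : ∀ y ∈ I, y = -U y - C * (U y) ^ (1 + 1 / lam)) :
    ∀ y ∈ I, -lam * U y + ((1 + lam) * y + U y) * deriv U y = 0 := by
  intro y hy
  have hUy := hpos y hy
  have hnhds : I ∈ nhds y := hI.mem_nhds hy
  have hd : HasDerivAt U (deriv U y) y := (hU.differentiableAt hnhds).hasDerivAt
  have hrhs := hd.neg.sub ((hd.rpow_const (p := 1 + 1 / lam) (Or.inl hUy.ne')).const_mul C)
  have hid := hrhs.congr_of_eventuallyEq (f₁ := fun z => z)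
    (Filter.eventually_of_mem hnhds fun z hz => himp z hz)
  have hone := hid.unique (hasDerivAt_id' y)
  rw [add_sub_cancel_left] at hone
  have hpow : U y ^ (1 + 1 / lam) = U y * U y ^ (1 / lam) := by
    rw [Real.rpow_add hUy, Real.rpow_one]
  have hrel := himp y hy
  rw [hpow] at hrel
  have hexp : lam * (1 + 1 / lam) = lam + 1 := by field_simp
  linear_combination lam * U y * hone + (1 + lam) * deriv U y * hrel
    + C * deriv U y * U y * U y ^ (1 / lam) * hexp
end

section
/- Let λ ∈ ℝ with λ ≠ 0 and λ ≠ -1, let I ⊆ ℝ be an open interval, and let U : ℝ → ℝ be continuously differentiable on I with U(y) > 0 for all y ∈ I. If U satisfies the self-similar Burgers equation -λ·U(y) + ((1+λ)·y + U(y))·U'(y) = 0 for all y ∈ I, then there exists a constant C ∈ ℝ such that y = -U(y) - C·U(y)^{1+1/λ} for all y ∈ I (the power being a real power of the positive number U(y)). -/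
/-!
The function `F y = (y + U y) * U y ^ (-(1 + 1/λ))` is a first integral of the equation:
its derivative is `U ^ (-(1 + 1/λ) - 1) / λ` times `λ U - ((1 + λ) y + U) U'`, which vanishes
on `I`. Since `I` is open and connected, `F` is constant there, and `C` is minus that constant.
-/

/-- If `U` is continuously differentiable and positive on an open interval `I`
(formalized as an open order-connected subset of `ℝ`) and satisfies the self-similar Burgers
equation there (with `λ ≠ 0`, `λ ≠ -1`), then there is a constant `C` such that the implicit
relation `y = -U(y) - C·U(y)^{1+1/λ}` holds on `I`. -/
theorem selfSimilarBurgers_implies_implicit (lam : ℝ) (h0 : lam ≠ 0) (h1 : lam ≠ -1)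
    (I : Set ℝ) (hI : IsOpen I) (hconn : I.OrdConnected) (U : ℝ → ℝ)
    (hU : ContDiffOn ℝ 1 U I) (hpos : ∀ y ∈ I, 0 < U y)
    (heq : ∀ y ∈ I, -lam * U y + ((1 + lam) * y + U y) * deriv U y = 0) :
    ∃ C : ℝ, ∀ y ∈ I, y = -U y - C * (U y) ^ (1 + 1 / lam) := by
  have hF : ∀ y ∈ I, HasDerivAt (fun y => (y + U y) * (U y) ^ (-(1 + 1 / lam))) 0 y := by
    intro y hy
    have hd : HasDerivAt U (deriv U y) y :=
      ((hU.differentiableOn one_ne_zero).differentiableAt (hI.mem_nhds hy)).hasDerivAt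
    have hp := hpos y hy
    refine HasDerivAt.congr_deriv (((hasDerivAt_id y).add hd).mul
      (hd.rpow_const (p := -(1 + 1 / lam)) (Or.inl hp.ne'))) ?_
    have hsplit : (U y) ^ (-(1 + 1 / lam)) = U y * (U y) ^ (-(1 + 1 / lam) - 1) := by
      rw [Real.rpow_sub_one hp.ne']
      field_simp
    simp only [id, Pi.add_apply]
    rw [hsplit]
    generalize (U y) ^ (-(1 + 1 / lam) - 1) = w
    have h := heq y hy
    field_simp
    linear_combination -w * h
  obtain ⟨c, hc⟩ := hI.exists_is_const_of_deriv_eq_zero hconn.isPreconnected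
    (fun y hy => (hF y hy).differentiableAt.differentiableWithinAt)
    (fun y hy => (hF y hy).deriv)
  refine ⟨-c, fun y hy => ?_⟩
  have hp := hpos y hy
  have h : (y + U y) * (U y) ^ (-(1 + 1 / lam)) = c := hc y hy
  rw [Real.rpow_neg hp.le] at h
  have hw : (U y) ^ (1 + 1 / lam) ≠ 0 := (Real.rpow_pos_of_pos hp _).ne'
  rw [← h, neg_mul, inv_mul_cancel_right₀ hw]
  ring
end

section
/- Let i be a natural number, set λ = 1/(2i+2), and let U : ℝ → ℝ be the inverse of the bijection g : ℝ → ℝ, g(u) = -u - u^{2i+3}. Then U satisfies the self-similar Burgers equation -λ·U(y) + ((1+λ)·y + U(y))·U'(y) = 0 for all y ∈ ℝ, and moreover U(-2) = 1 and U'(0) = -1. -/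
/-!
Write `n = 2 * i + 3` and `g u = -u - u ^ n`. Since `n` is odd, `g` is strictly antitone with
`g' u = -(1 + n * u ^ (n - 1)) < 0`, so its inverse `U` is an antitone surjection, hence continuous,
and the inverse function rule gives `U' y = 1 / g' (U y)`. With `λ = 1 / (n - 1)` one has
`1 + λ = n * λ`, so for `u = U y` the coefficient `(1 + λ) * y + u` collapses to `λ * u * g' u`,
which is the equation. The two values come from `g 1 = -2` and `g 0 = 0`.
-/

/-- A right inverse of `u ↦ -u - u ^ n`, `n` odd, that is also a left inverse is continuous:
it is an antitone surjection. -/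
lemma continuous_inverse {n : ℕ} (hn : Odd n) {U : ℝ → ℝ}
    (hleft : Function.LeftInverse U (fun u : ℝ => -u - u ^ n))
    (hright : Function.RightInverse U (fun u : ℝ => -u - u ^ n)) : Continuous U := by
  have hmono : Monotone fun y => -U y := by
    intro a b hab
    by_contra! h
    have hlt : U a < U b := by simpa using h
    have hpow := hn.strictMono_pow hlt
    have ha : -U a - U a ^ n = a := hright a
    have hb : -U b - U b ^ n = b := hright b
    simp only at hpow
    linarith
  have hsurj : Function.Surjective fun y => -U y := by
    intro z
    obtain ⟨y, hy⟩ := hleft.surjective (-z)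
    exact ⟨y, by simp [hy]⟩
  exact continuous_neg_iff.mp (hmono.continuous_of_surjective hsurj)

/-- For `i : ℕ` and `λ = 1/(2i+2)`, the inverse `U` of the bijection
`g(u) = -u - u^(2i+3)` satisfies the self-similar Burgers equation
`-λ·U + ((1+λ)·y + U)·U' = 0` on all of `ℝ`, together with `U(-2) = 1` and `U'(0) = -1`. -/
theorem smooth_selfSimilar_burgers_solution (i : ℕ) (lam : ℝ)
    (hlam : lam = 1 / (2 * (i : ℝ) + 2)) (U : ℝ → ℝ)
    (hleft : Function.LeftInverse U (fun u : ℝ => -u - u ^ (2 * i + 3)))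
    (hright : Function.RightInverse U (fun u : ℝ => -u - u ^ (2 * i + 3))) :
    (∀ y : ℝ, -lam * U y + ((1 + lam) * y + U y) * deriv U y = 0) ∧
    U (-2) = 1 ∧ deriv U 0 = -1 := by
  have hcont : Continuous U := continuous_inverse ⟨i + 1, by ring⟩ hleft hright
  have hpos : ∀ u : ℝ, 0 < 1 + (2 * (i : ℝ) + 3) * u ^ (2 * i + 2) := by
    intro u
    have hu : 0 ≤ u ^ (2 * i + 2) := Even.pow_nonneg ⟨i + 1, by ring⟩ u
    positivity
  have hderiv : ∀ y, deriv U y = (-(1 + (2 * (i : ℝ) + 3) * U y ^ (2 * i + 2)))⁻¹ := by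
    intro y
    have hg : HasDerivAt (fun u : ℝ => -u - u ^ (2 * i + 3))
        (-(1 + (2 * (i : ℝ) + 3) * U y ^ (2 * i + 2))) (U y) := by
      refine ((hasDerivAt_id (U y)).neg.sub (hasDerivAt_pow (2 * i + 3) (U y))).congr_deriv ?_
      rw [show 2 * i + 3 - 1 = 2 * i + 2 by omega]
      push_cast
      ring
    exact (HasDerivAt.of_local_left_inverse hcont.continuousAt hg (neg_ne_zero.mpr (hpos _).ne')
      (Filter.Eventually.of_forall hright)).deriv
  refine ⟨fun y => ?_, ?_, ?_⟩
  · have hy : -U y - U y ^ (2 * i + 3) = y := hright y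
    have hl : lam * (2 * (i : ℝ) + 2) = 1 := by
      rw [hlam]
      field_simp
    have hcoef : (1 + lam) * y + U y
        = lam * U y * (-(1 + (2 * (i : ℝ) + 3) * U y ^ (2 * i + 2))) := by
      have hpow : U y ^ (2 * i + 3) = U y * U y ^ (2 * i + 2) := by ring
      rw [hpow] at hy
      linear_combination -(1 + lam) * hy + U y * U y ^ (2 * i + 2) * hl
    rw [hderiv, hcoef, mul_inv_cancel_right₀ (neg_ne_zero.mpr (hpos _).ne')]
    ring
  · have h := hleft 1
    norm_num at h
    exact h
  · have h : U 0 = 0 := by simpa using hleft 0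
    rw [hderiv, h]
    norm_num
end

section
/- Let λ > 0 and C > 0. The function g : [0,∞) → ℝ defined by g(u) = -u - C·u^{1+1/λ} (real power, with g(0) = 0) is continuous, strictly antitone on [0,∞), and maps [0,∞) bijectively onto (-∞,0]. Its inverse U : (-∞,0] → [0,∞) is differentiable at every y < 0 and satisfies the self-similar Burgers equation -λ·U(y) + ((1+λ)·y + U(y))·U'(y) = 0 for all y < 0. -/
/-!
The map `g = gProfile lam C` expands distances on `[0,∞)`: since `u ↦ u^(1+1/λ)` is increasing,
`u - v ≤ g v - g u` for `0 ≤ v ≤ u` (`sub_le_gProfile_sub`). This gives strict monotonicity, and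
it makes any inverse `U` 1-Lipschitz, hence continuous. Surjectivity onto `(-∞,0]` is the
intermediate value theorem on `[0,-y]`, as `g (-y) ≤ y`. For `y < 0` one has `U y > 0`, where `g`
is differentiable with `g' u = -1 - C (1+1/λ) u^(1/λ) < 0`, so the inverse function rule yields
`U' y = 1 / g' (U y)`. Substituting `y = g u` turns the Burgers equation into the identity
`(1+λ) g u + u = λ u g' u`.
-/

/-- The function `g(u) = -u - C·u^(1+1/λ)` (real power). -/
noncomputable def gProfile (lam C : ℝ) (u : ℝ) : ℝ := -u - C * u ^ (1 + 1 / lam)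

theorem gProfile_zero {lam : ℝ} (C : ℝ) (hlam : 0 < lam) : gProfile lam C 0 = 0 := by
  have h : (1 + 1 / lam) ≠ 0 := by positivity
  rw [gProfile, Real.zero_rpow h]
  simp

theorem continuous_gProfile {lam : ℝ} (C : ℝ) (hlam : 0 < lam) :
    Continuous (gProfile lam C) := by
  have h : 0 ≤ 1 + 1 / lam := by positivity
  exact continuous_neg.sub (continuous_const.mul (Real.continuous_rpow_const h))

/-- `gProfile` is expanding on `[0,∞)`; this yields both its strict antitonicity and the
1-Lipschitz bound for its inverse. -/
theorem sub_le_gProfile_sub {lam C u v : ℝ} (hlam : 0 < lam) (hC : 0 < C) (hv : 0 ≤ v)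
    (hvu : v ≤ u) : u - v ≤ gProfile lam C v - gProfile lam C u := by
  have h : v ^ (1 + 1 / lam) ≤ u ^ (1 + 1 / lam) :=
    Real.rpow_le_rpow hv hvu (by positivity)
  have := mul_le_mul_of_nonneg_left h hC.le
  unfold gProfile
  linarith

theorem abs_sub_le_gProfile {lam C u v : ℝ} (hlam : 0 < lam) (hC : 0 < C) (hu : 0 ≤ u)
    (hv : 0 ≤ v) : |u - v| ≤ |gProfile lam C u - gProfile lam C v| := by
  rcases le_total v u with h | h
  · rw [abs_of_nonneg (sub_nonneg.2 h), abs_sub_comm (gProfile lam C u)]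
    exact (sub_le_gProfile_sub hlam hC hv h).trans (le_abs_self _)
  · rw [abs_sub_comm, abs_of_nonneg (sub_nonneg.2 h)]
    exact (sub_le_gProfile_sub hlam hC hu h).trans (le_abs_self _)

theorem hasDerivAt_gProfile (lam C : ℝ) {u : ℝ} (hu : 0 < u) :
    HasDerivAt (gProfile lam C) (-1 - C * ((1 + 1 / lam) * u ^ (1 / lam))) u := by
  have h := Real.hasDerivAt_rpow_const (x := u) (p := 1 + 1 / lam) (Or.inl hu.ne')
  rw [add_sub_cancel_left] at h
  exact (hasDerivAt_id u).neg.sub (h.const_mul C)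

theorem surjOn_gProfile {lam C : ℝ} (hlam : 0 < lam) (hC : 0 < C) :
    Set.SurjOn (gProfile lam C) (Set.Ici 0) (Set.Iic 0) := by
  intro y hy
  have hy' : (0 : ℝ) ≤ -y := neg_nonneg.2 hy
  have h1 := sub_le_gProfile_sub hlam hC le_rfl hy'
  rw [gProfile_zero C hlam] at h1
  obtain ⟨u, hu, rfl⟩ := intermediate_value_Icc' hy' (continuous_gProfile C hlam).continuousOn
    (show y ∈ Set.Icc _ _ from ⟨by linarith, by rw [gProfile_zero C hlam]; exact hy⟩)
  exact ⟨u, hu.1, rfl⟩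

/-- An inverse of `gProfile` is 1-Lipschitz on `(-∞,0]`, so it is continuous at negative points. -/
theorem continuousAt_inverse_gProfile {lam C : ℝ} (hlam : 0 < lam) (hC : 0 < C) {U : ℝ → ℝ}
    (hU : Set.MapsTo U (Set.Iic 0) (Set.Ici 0))
    (hr : Set.RightInvOn U (gProfile lam C) (Set.Iic 0)) {y : ℝ} (hy : y < 0) :
    ContinuousAt U y := by
  have hL : LipschitzOnWith 1 U (Set.Iic 0) := by
    refine LipschitzOnWith.of_dist_le_mul fun a ha b hb => ?_
    have h := abs_sub_le_gProfile hlam hC (hU ha) (hU hb)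
    rw [hr ha, hr hb] at h
    simpa [Real.dist_eq] using h
  exact hL.continuousOn.continuousAt (Iic_mem_nhds hy)

/-- For `λ > 0`, `C > 0`, the map `g(u) = -u - C·u^{1+1/λ}` is continuous and
strictly antitone on `[0,∞)` and maps `[0,∞)` bijectively onto `(-∞,0]`; any inverse
`U : (-∞,0] → [0,∞)` of `g` is differentiable at every `y < 0` and satisfies the
self-similar Burgers equation `-λ·U + ((1+λ)·y + U)·U' = 0` there. -/
theorem implicit_profile_solves_selfSimilarBurgers (lam C : ℝ) (hlam : 0 < lam) (hC : 0 < C) :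
    ContinuousOn (gProfile lam C) (Set.Ici 0) ∧
    StrictAntiOn (gProfile lam C) (Set.Ici 0) ∧
    Set.BijOn (gProfile lam C) (Set.Ici 0) (Set.Iic 0) ∧
    ∀ U : ℝ → ℝ, Set.MapsTo U (Set.Iic 0) (Set.Ici 0) →
      Set.InvOn U (gProfile lam C) (Set.Ici 0) (Set.Iic 0) →
      ∀ y : ℝ, y < 0 →
        DifferentiableAt ℝ U y ∧
        -lam * U y + ((1 + lam) * y + U y) * deriv U y = 0 := by
  have hanti : StrictAntiOn (gProfile lam C) (Set.Ici 0) := fun a ha b _ hab => by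
    have := sub_le_gProfile_sub hlam hC ha hab.le
    linarith
  refine ⟨(continuous_gProfile C hlam).continuousOn, hanti,
    ⟨fun u hu => ?_, hanti.injOn, surjOn_gProfile hlam hC⟩, ?_⟩
  · have := hanti.antitoneOn Set.self_mem_Ici hu hu
    rwa [gProfile_zero C hlam] at this
  intro U hU hinv y hy
  have hgU : gProfile lam C (U y) = y := hinv.2 hy.le
  have hpos : 0 < U y := by
    refine lt_of_le_of_ne (hU hy.le) fun h => ?_
    rw [← h, gProfile_zero C hlam] at hgU
    exact hy.ne' hgU
  have hw : 0 < U y ^ (1 / lam) := Real.rpow_pos_of_pos hpos _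
  have hne : -1 - C * ((1 + 1 / lam) * U y ^ (1 / lam)) ≠ 0 := by
    have : 0 < C * ((1 + 1 / lam) * U y ^ (1 / lam)) := by positivity
    linarith
  have hder := HasDerivAt.of_local_left_inverse
    (continuousAt_inverse_gProfile hlam hC hU hinv.2 hy) (hasDerivAt_gProfile lam C hpos) hne
    (Filter.mem_of_superset (Iic_mem_nhds hy) fun x hx => hinv.2 hx)
  refine ⟨hder.differentiableAt, ?_⟩
  have key : (1 + lam) * y + U y
      = lam * U y * (-1 - C * ((1 + 1 / lam) * U y ^ (1 / lam))) := by
    rw [gProfile, Real.rpow_add hpos, Real.rpow_one] at hgU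
    generalize U y ^ (1 / lam) = w at hgU ⊢
    generalize U y = u at hgU ⊢
    rw [← hgU]
    field_simp
    ring
  rw [hder.deriv, key, mul_assoc (lam * U y), mul_inv_cancel₀ hne]
  ring
end

section
/- Let λ ∈ ℝ, let U : ℝ² → ℝ² and P : ℝ² → ℝ be twice continuously differentiable, and let Θ : ℝ² → ℝ be continuously differentiable. Assume that for all y ∈ ℝ²: (i) -λ·U(y) + D U(y)[(1+λ)·y + U(y)] + ∇P(y) = (0, -Θ(y)) and (ii) ∂₁U₁(y) + ∂₂U₂(y) = 0. Define the scalar vorticity Ω(y) = ∂₂U₁(y) - ∂₁U₂(y) and Φ(y) = ∂₁Θ(y). Then for all y ∈ ℝ²: Ω(y) + ∇Ω(y)·((1+λ)·y + U(y)) = Φ(y). -/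
/-!
The scalar vorticity equation is the curl of the momentum equation. Write
`V y = (1 + lam) • y + U y`. Differentiating one component `f` of the momentum equation in a
direction `d` (`fderiv_momentum_component`) produces the second-order terms `D²f(d, V)` and
`D²P(d, e)`, and the first-order term `Df((1 + lam) • d + DU d)`. In the difference
`∂₂(first component) - ∂₁(second component)` the pressure terms cancel and `D²f(d, V)` becomes
the derivative of `∂_d f` along `V`, both because second derivatives are symmetric
(`fderiv_fderiv_comm`). The linear terms add up to `-lam Ω + (1 + lam) Ω = Ω`, and the quadratic
terms in `DU` combine to `Ω · div U = 0`.
-/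

/-- Partial derivative in the first coordinate direction. -/
noncomputable def pd1 (f : ℝ × ℝ → ℝ) (y : ℝ × ℝ) : ℝ := fderiv ℝ f y (1, 0)

/-- Partial derivative in the second coordinate direction. -/
noncomputable def pd2 (f : ℝ × ℝ → ℝ) (y : ℝ × ℝ) : ℝ := fderiv ℝ f y (0, 1)

/-- Schwarz's theorem for `C²` functions on the plane. -/
lemma fderiv_fderiv_comm {f : ℝ × ℝ → ℝ} (hf : ContDiff ℝ 2 f) (y a b : ℝ × ℝ) :
    fderiv ℝ (fderiv ℝ f) y a b = fderiv ℝ (fderiv ℝ f) y b a := by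
  have h : IsSymmSndFDerivAt ℝ f y := hf.contDiffAt.isSymmSndFDerivAt (by simp)
  exact h a b

lemma differentiable_fderiv_of_contDiff_two {f : ℝ × ℝ → ℝ} (hf : ContDiff ℝ 2 f) :
    Differentiable ℝ (fderiv ℝ f) :=
  (hf.fderiv_right (m := 1) (by norm_num)).differentiable (by norm_num)

/-- A directional derivative of a `C²` function is differentiable, with derivative given by the
second derivative. -/
lemma hasFDerivAt_fderiv_apply {f : ℝ × ℝ → ℝ} (hf : ContDiff ℝ 2 f) (e y : ℝ × ℝ) :
    HasFDerivAt (fun z => fderiv ℝ f z e) ((fderiv ℝ (fderiv ℝ f) y).flip e) y := by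
  have h := (differentiable_fderiv_of_contDiff_two hf y).hasFDerivAt.clm_apply
    (hasFDerivAt_const e y)
  simpa using h

/-- The derivative in direction `d` of one component of the momentum operator. -/
lemma fderiv_momentum_component {f P q : ℝ × ℝ → ℝ} {U : ℝ × ℝ → ℝ × ℝ} {lam : ℝ} {e : ℝ × ℝ}
    (hf : ContDiff ℝ 2 f) (hP : ContDiff ℝ 2 P) (hU : Differentiable ℝ U)
    (h : ∀ z, -lam * f z + fderiv ℝ f z ((1 + lam) • z + U z) + fderiv ℝ P z e = q z)
    (y d : ℝ × ℝ) :
    fderiv ℝ q y d = -lam * fderiv ℝ f y d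
      + fderiv ℝ (fderiv ℝ f) y d ((1 + lam) • y + U y)
      + fderiv ℝ f y ((1 + lam) • d + fderiv ℝ U y d)
      + fderiv ℝ (fderiv ℝ P) y d e := by
  have h1 : HasFDerivAt f (fderiv ℝ f y) y :=
    (hf.differentiable (by norm_num) y).hasFDerivAt
  have hV : HasFDerivAt (fun z => (1 + lam) • z + U z)
      ((1 + lam) • ContinuousLinearMap.id ℝ (ℝ × ℝ) + fderiv ℝ U y) y :=
    ((hasFDerivAt_id y).const_smul (1 + lam)).add (hU y).hasFDerivAt
  have h2 := (differentiable_fderiv_of_contDiff_two hf y).hasFDerivAt.clm_apply hV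
  have h3 := ((h1.const_mul (-lam)).add h2).add (hasFDerivAt_fderiv_apply hP e y)
  have hq : HasFDerivAt q _ y := h3.congr_of_eventuallyEq
    (Filter.Eventually.of_forall fun z => (h z).symm)
  rw [hq.fderiv]
  simp
  ring

/-- A linear functional on the plane in coordinates. -/
lemma clm_apply_eq_coords (L : ℝ × ℝ →L[ℝ] ℝ) (w : ℝ × ℝ) :
    L w = w.1 * L (1, 0) + w.2 * L (0, 1) := by
  have hw : w = w.1 • ((1, 0) : ℝ × ℝ) + w.2 • ((0, 1) : ℝ × ℝ) := by
    ext <;> simp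
  conv_lhs => rw [hw]
  simp only [map_add, map_smul, smul_eq_mul]

/-- Taking the curl of the self-similar momentum equation (together with the
divergence-free condition) yields the self-similar vorticity equation
`Ω + ∇Ω·((1+λ)y + U) = Φ`, where `Ω = ∂₂U₁ - ∂₁U₂` and `Φ = ∂₁Θ`. -/
theorem selfSimilar_vorticity_equation (lam : ℝ) (U : ℝ × ℝ → ℝ × ℝ) (P Θ : ℝ × ℝ → ℝ)
    (hU : ContDiff ℝ 2 U) (hP : ContDiff ℝ 2 P) (hΘ : ContDiff ℝ 1 Θ)
    (hmom : ∀ y : ℝ × ℝ,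
      (-lam) • U y + fderiv ℝ U y ((1 + lam) • y + U y) + (pd1 P y, pd2 P y)
        = ((0 : ℝ), -Θ y))
    (hdiv : ∀ y : ℝ × ℝ,
      pd1 (fun z => (U z).1) y + pd2 (fun z => (U z).2) y = 0) :
    ∀ y : ℝ × ℝ,
      (pd2 (fun z => (U z).1) y - pd1 (fun z => (U z).2) y)
        + fderiv ℝ (fun z => pd2 (fun w => (U w).1) z - pd1 (fun w => (U w).2) z) y
            ((1 + lam) • y + U y)
        = pd1 Θ y := by
  intro y
  have hUd : Differentiable ℝ U := hU.differentiable (by norm_num)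
  set u : ℝ × ℝ → ℝ := fun z => (U z).1 with hu_def
  set v : ℝ × ℝ → ℝ := fun z => (U z).2 with hv_def
  have hu : ContDiff ℝ 2 u := hU.fst
  have hv : ContDiff ℝ 2 v := hU.snd
  have hu1 : ∀ z w, fderiv ℝ u z w = (fderiv ℝ U z w).1 := fun z w => by
    rw [((hUd z).hasFDerivAt.fst).fderiv]; rfl
  have hv1 : ∀ z w, fderiv ℝ v z w = (fderiv ℝ U z w).2 := fun z w => by
    rw [((hUd z).hasFDerivAt.snd).fderiv]; rfl
  have hm1 : ∀ z, -lam * u z + fderiv ℝ u z ((1 + lam) • z + U z) + fderiv ℝ P z (1, 0)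
      = (fun _ => (0 : ℝ)) z := fun z => by
    rw [hu1]; exact congrArg Prod.fst (hmom z)
  have hm2 : ∀ z, -lam * v z + fderiv ℝ v z ((1 + lam) • z + U z) + fderiv ℝ P z (0, 1)
      = (fun z => -Θ z) z := fun z => by
    rw [hv1]; exact congrArg Prod.snd (hmom z)
  have e1 := fderiv_momentum_component hu hP hUd hm1 y (0, 1)
  have e2 := fderiv_momentum_component hv hP hUd hm2 y (1, 0)
  have hΩ : HasFDerivAt (fun z => pd2 u z - pd1 v z) _ y :=
    (hasFDerivAt_fderiv_apply hu (0, 1) y).sub (hasFDerivAt_fderiv_apply hv (1, 0) y)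
  have hd := hdiv y
  rw [hΩ.fderiv]
  simp only [pd1, pd2, sub_apply, ContinuousLinearMap.flip_apply] at hd ⊢
  have hΘ' : fderiv ℝ (fun z => -Θ z) y (1, 0) = -fderiv ℝ Θ y (1, 0) := by
    rw [fderiv_fun_neg]; rfl
  rw [hΘ', map_add (fderiv ℝ v y), map_smul (fderiv ℝ v y),
    clm_apply_eq_coords (fderiv ℝ v y) (fderiv ℝ U y (1, 0)),
    ← hu1, ← hv1, fderiv_fderiv_comm hv y (1, 0), fderiv_fderiv_comm hP y (1, 0)] at e2
  rw [fderiv_fun_const, Pi.zero_apply, ContinuousLinearMap.zero_apply,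
    map_add (fderiv ℝ u y), map_smul (fderiv ℝ u y),
    clm_apply_eq_coords (fderiv ℝ u y) (fderiv ℝ U y (0, 1)),
    ← hu1, ← hv1, fderiv_fderiv_comm hu y (0, 1)] at e1
  simp only [smul_eq_mul] at e1 e2
  -- The quadratic terms in `DU` amount to `Ω · div U`, hence the multiple of `hd`.
  linear_combination e2 - e1 - (fderiv ℝ u y (0, 1) - fderiv ℝ v y (1, 0)) * hd
end

section
/- Let λ ∈ ℝ, let Θ : ℝ² → ℝ be twice continuously differentiable, and let U : ℝ² → ℝ² be continuously differentiable. Assume that (1-λ)·Θ(y) + ∇Θ(y)·((1+λ)·y + U(y)) = 0 for all y ∈ ℝ². Define Φ(y) = ∂₁Θ(y) and Ψ(y) = ∂₂Θ(y). Then for all y ∈ ℝ²: (2 + ∂₁U₁(y))·Φ(y) + ∇Φ(y)·((1+λ)·y + U(y)) = -∂₁U₂(y)·Ψ(y), and (2 + ∂₂U₂(y))·Ψ(y) + ∇Ψ(y)·((1+λ)·y + U(y)) = -∂₂U₁(y)·Φ(y). -/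
/-- The transport equation differentiated in an arbitrary direction `v`, with the symmetry of the
second derivative of `Θ` used to write `D²Θ(v, V)` as the derivative of `DΘ(v)` along `V`. -/
lemma transport_directional_deriv {E : Type*} [NormedAddCommGroup E] [NormedSpace ℝ E] (lam : ℝ)
    {Θ : E → ℝ} {U : E → E} (hΘ : ContDiff ℝ 2 Θ) (hU : ContDiff ℝ 1 U)
    (htr : ∀ y, (1 - lam) * Θ y + fderiv ℝ Θ y ((1 + lam) • y + U y) = 0) (y v : E) :
    2 * fderiv ℝ Θ y v + fderiv ℝ (fun z => fderiv ℝ Θ z v) y ((1 + lam) • y + U y)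
      + fderiv ℝ Θ y (fderiv ℝ U y v) = 0 := by
  have hΘ' : HasFDerivAt Θ (fderiv ℝ Θ y) y := (hΘ.differentiable (by norm_num) y).hasFDerivAt
  have hU' : HasFDerivAt U (fderiv ℝ U y) y := (hU.differentiable (by norm_num) y).hasFDerivAt
  have hD : HasFDerivAt (fderiv ℝ Θ) (fderiv ℝ (fderiv ℝ Θ) y) y :=
    ((hΘ.fderiv_right (m := 1) (by norm_num)).differentiable (by norm_num) y).hasFDerivAt
  have hsymm : IsSymmSndFDerivAt ℝ Θ y := hΘ.contDiffAt.isSymmSndFDerivAt (by simp)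
  have hV := ((hasFDerivAt_id (𝕜 := ℝ) y).const_smul (1 + lam)).add hU'
  have key := (hΘ'.const_mul (1 - lam)).add (hD.clm_apply hV)
  have hzero := key.unique ((hasFDerivAt_const (0 : ℝ) y).congr_of_eventuallyEq
    (Filter.Eventually.of_forall htr))
  have hzero_v := DFunLike.congr_fun hzero v
  have hdir := (hD.clm_apply (hasFDerivAt_const v y)).fderiv
  rw [hdir]
  have hs := hsymm v ((1 + lam) • y + U y)
  simp at hzero_v hs ⊢
  linarith

/-- A linear form on `ℝ²` applied to `DU(v)`, expanded in the standard basis. -/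
lemma apply_fderiv_eq_sum (L : ℝ × ℝ →L[ℝ] ℝ) {U : ℝ × ℝ → ℝ × ℝ} {y : ℝ × ℝ}
    (hU : DifferentiableAt ℝ U y) (v : ℝ × ℝ) :
    L (fderiv ℝ U y v) = fderiv ℝ (fun z => (U z).1) y v * L (1, 0)
      + fderiv ℝ (fun z => (U z).2) y v * L (0, 1) := by
  have h₁ : fderiv ℝ (fun z => (U z).1) y v = (fderiv ℝ U y v).1 := by
    rw [hU.hasFDerivAt.fst.fderiv]; rfl
  have h₂ : fderiv ℝ (fun z => (U z).2) y v = (fderiv ℝ U y v).2 := by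
    rw [hU.hasFDerivAt.snd.fderiv]; rfl
  rw [h₁, h₂, ← smul_eq_mul, ← smul_eq_mul, ← map_smul, ← map_smul, ← map_add]
  congr 1
  ext <;> simp

/-- Differentiating the self-similar transport equation
`(1-λ)Θ + ∇Θ·((1+λ)y + U) = 0` yields the equations for `Φ = ∂₁Θ` and `Ψ = ∂₂Θ`:
`(2 + ∂₁U₁)Φ + ∇Φ·((1+λ)y + U) = -∂₁U₂·Ψ` and `(2 + ∂₂U₂)Ψ + ∇Ψ·((1+λ)y + U) = -∂₂U₁·Φ`. -/
theorem selfSimilar_temperature_gradient_equations (lam : ℝ) (Θ : ℝ × ℝ → ℝ)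
    (U : ℝ × ℝ → ℝ × ℝ) (hΘ : ContDiff ℝ 2 Θ) (hU : ContDiff ℝ 1 U)
    (htr : ∀ y : ℝ × ℝ,
      (1 - lam) * Θ y + fderiv ℝ Θ y ((1 + lam) • y + U y) = 0) :
    ∀ y : ℝ × ℝ,
      ((2 + pd1 (fun z => (U z).1) y) * pd1 Θ y
          + fderiv ℝ (fun z => pd1 Θ z) y ((1 + lam) • y + U y)
        = -(pd1 (fun z => (U z).2) y) * pd2 Θ y) ∧
      ((2 + pd2 (fun z => (U z).2) y) * pd2 Θ y
          + fderiv ℝ (fun z => pd2 Θ z) y ((1 + lam) • y + U y)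
        = -(pd2 (fun z => (U z).1) y) * pd1 Θ y) := by
  intro y
  have hUy : DifferentiableAt ℝ U y := hU.differentiable (by norm_num) y
  have h₁ := transport_directional_deriv lam hΘ hU htr y (1, 0)
  have h₂ := transport_directional_deriv lam hΘ hU htr y (0, 1)
  rw [apply_fderiv_eq_sum _ hUy] at h₁ h₂
  unfold pd1 pd2
  constructor <;> linarith
end
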